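/- Let r ≥ 2 be an integer, let n be sufficiently large, let b be an integer with 1 ≤ b ≤ 2^{-10} r^{-2} n, and set t = 2^5 r b, s = 8rb and α = (r+1)/(2r). Let G be a graph on n vertices with minimum degree δ(G) ≥ αn and let χ be an r-colouring of E(G) such that for each colour c ∈ {1,…,r} and each vertex v there exists a matching in G[N(v)] with at least 2^9 r b edges none of which has colour c. If there exists a colour c ∈ {1,…,r} such that |X_c| ≥ s/4 or |Y_c| ≥ s/4, then G contains a Hamilton cycle with colour bias at least b. -/

import Mathlib

open SimpleGraph
open scoped Classical

/-- `M` is a matching in `G`: a set of pairwise vertex-disjoint edges of `G`. -/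
def MatchingIn {V : Type*} (M : Finset (Sym2 V)) (G : SimpleGraph V) : Prop :=
  (∀ e ∈ M, e ∈ G.edgeSet) ∧
  ∀ e ∈ M, ∀ f ∈ M, e ≠ f → ∀ v : V, ¬(v ∈ e ∧ v ∈ f)

/-- `X_c`: the set of vertices `v` such that every matching in `G(v,c)` (the graph on
`N(v)` consisting of the edges of `G[N(v)]` not having both endpoints in `N_c(v)`) has
fewer than `8t` edges. -/
def Xset {n r : ℕ} (G : SimpleGraph (Fin n)) (χ : Sym2 (Fin n) → Fin r) (c : Fin r)
    (t : ℕ) : Set (Fin n) :=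
  {v | ∀ M : Finset (Sym2 (Fin n)), MatchingIn M G →
    (∀ e ∈ M, ∀ w ∈ e, G.Adj v w) →
    (∀ e ∈ M, ¬ ∀ w ∈ e, χ s(v, w) = c) →
    M.card < 8 * t}

/-- `Y_c`: the set of vertices `v` such that `B(v,c)` (the bipartite subgraph of
`G[N(v)]` between `N_c(v)` and `N(v) \ N_c(v)`) contains a matching with at least `4t`
edges, none of colour `c`. -/
def Yset {n r : ℕ} (G : SimpleGraph (Fin n)) (χ : Sym2 (Fin n) → Fin r) (c : Fin r)
    (t : ℕ) : Set (Fin n) :=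
  {v | ∃ M : Finset (Sym2 (Fin n)), MatchingIn M G ∧
    (∀ e ∈ M, ∀ w ∈ e, G.Adj v w) ∧
    (∀ e ∈ M, ∃ a b : Fin n, e = s(a, b) ∧ χ s(v, a) = c ∧ χ s(v, b) ≠ c) ∧
    (∀ e ∈ M, χ e ≠ c) ∧ 4 * t ≤ M.card}

/-!
A *gadget* consists of a vertex and two disjoint edges in its neighbourhood such that the numbers
of edges of the various colours change differently when the vertex is inserted into one edge of a
tour or into the other. A vertex of `X_c` is the center of a gadget whose two edges have different
colours while all edges from the center to them have colour `c`. A vertex `v` of `Y_c` lies in a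
gadget with center `q` and edges `vp` and `zw`, where `pq` is an edge of the matching in `B(v, c)`
and `zw` is any edge in `N(q)` not of colour `c`: inserting `q` into `vp` loses an edge of colour
`c`, inserting it into `zw` does not. Greedily, we obtain `2rb` pairwise disjoint gadgets.

Since all degrees exceed `n / 2` by a margin, a Pósa-type exchange that reverses a segment of a
tour of the remaining vertices, removing its non-edges without breaking the edges of the gadgets,
yields a cycle through all these edges that avoids the centers. Each center can then be inserted
into either edge of its gadget. An insertion replaces one edge by two, so its gains add up to `1`
over all colours; as the two insertions differ in some colour, the maxima of their gains add up to
at least `2`. Choosing for every colour `d` the insertions that are best for `d`, we obtain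
Hamilton cycles whose numbers of edges of colour `d` add up to at least `n + 2rb` over all `d`,
so one of them has colour bias at least `2b`.
-/

section Tours

variable {V : Type*}

/-- The edges `s(l₀, l₁), s(l₁, l₂), …` of the path visiting the vertices of `l` in order. -/
def pathEdges (l : List V) : List (Sym2 V) := l.zipWith (s(·, ·)) l.tail

/-- The edges of the closed tour visiting the vertices of `l` in cyclic order: the edges of the
path `l` together with the closing edge from the last vertex of `l` to the first. A tour of one
vertex consists of a loop and a tour of two vertices uses their edge twice. -/
def tourEdges (l : List V) : Multiset (Sym2 V) := pathEdges (l ++ l.take 1)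

lemma pathEdges_cons_cons (x y : V) (l : List V) :
    pathEdges (x :: y :: l) = s(x, y) :: pathEdges (y :: l) := rfl

lemma length_pathEdges (l : List V) : (pathEdges l).length = l.length - 1 := by
  simp [pathEdges]

lemma pathEdges_append {A B : List V} (hA : A ≠ []) (hB : B ≠ []) :
    pathEdges (A ++ B) = pathEdges A ++ s(A.getLast hA, B.head hB) :: pathEdges B := by
  induction A with
  | nil => exact absurd rfl hA
  | cons x A ih =>
    cases A with
    | nil => obtain ⟨y, B, rfl⟩ := List.exists_cons_of_ne_nil hB; rfl
    | cons y A => simpa [pathEdges_cons_cons] using ih (by simp)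

lemma pathEdges_cons (x : V) {l : List V} (hl : l ≠ []) :
    pathEdges (x :: l) = s(x, l.head hl) :: pathEdges l :=
  pathEdges_append (List.cons_ne_nil x []) hl

lemma pathEdges_reverse_perm (l : List V) : (pathEdges l.reverse).Perm (pathEdges l) := by
  induction l with
  | nil => rfl
  | cons x l ih =>
    obtain rfl | hl := eq_or_ne l []
    · rfl
    · rw [List.reverse_cons, pathEdges_append (by simpa) (by simp), pathEdges_cons x hl,
        List.getLast_reverse, Sym2.eq_swap]
      exact (List.perm_append_singleton _ _).trans (ih.cons _)

lemma mem_of_mem_pathEdges {l : List V} {e : Sym2 V} (he : e ∈ pathEdges l) {v : V}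
    (hv : v ∈ e) : v ∈ l := by
  obtain ⟨i, hi, rfl⟩ := List.mem_iff_getElem.1 he
  simp only [pathEdges, List.getElem_zipWith, Sym2.mem_iff] at hv
  rcases hv with rfl | rfl
  · exact List.getElem_mem _
  · exact List.mem_of_mem_tail (List.getElem_mem _)

lemma nodup_pathEdges {l : List V} (hl : l.Nodup) : (pathEdges l).Nodup := by
  induction l with
  | nil => exact List.nodup_nil
  | cons x l ih =>
    cases l with
    | nil => exact List.nodup_nil
    | cons y l =>
      obtain ⟨hx, hl⟩ := List.nodup_cons.1 hl
      exact List.nodup_cons.2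
        ⟨fun h => hx (mem_of_mem_pathEdges h (Sym2.mem_mk_left x y)), ih hl⟩

lemma exists_append_of_mem_pathEdges {l : List V} {e : Sym2 V} (he : e ∈ pathEdges l) :
    ∃ (A B : List V) (hA : A ≠ []) (hB : B ≠ []),
      l = A ++ B ∧ e = s(A.getLast hA, B.head hB) := by
  induction l with
  | nil => simp [pathEdges] at he
  | cons x l ih =>
    cases l with
    | nil => simp [pathEdges] at he
    | cons y l =>
      rcases List.mem_cons.1 he with rfl | he
      · exact ⟨[x], y :: l, by simp, by simp, rfl, rfl⟩
      · obtain ⟨A, B, hA, hB, hl, rfl⟩ := ih he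
        exact ⟨x :: A, B, by simp, hB, by rw [hl]; rfl, by rw [List.getLast_cons hA]⟩

lemma pathEdges_subset_of_infix {l₁ l₂ : List V} (h : l₁ <:+: l₂) :
    pathEdges l₁ ⊆ pathEdges l₂ := by
  obtain ⟨A, B, rfl⟩ := h
  obtain rfl | h₁ := eq_or_ne l₁ []
  · simp [pathEdges]
  have hAl : pathEdges l₁ ⊆ pathEdges (A ++ l₁) := by
    obtain rfl | hA := eq_or_ne A []
    · simp
    · rw [pathEdges_append hA h₁]; grind
  obtain rfl | hB := eq_or_ne B []
  · simpa using hAl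
  · rw [pathEdges_append (by simp [h₁]) hB]; grind

lemma tourEdges_eq_cons {l : List V} (hl : l ≠ []) :
    tourEdges l = s(l.getLast hl, l.head hl) ::ₘ (pathEdges l : Multiset (Sym2 V)) := by
  obtain ⟨x, A, rfl⟩ := List.exists_cons_of_ne_nil hl
  rw [tourEdges, pathEdges_append hl (by simp), Multiset.cons_coe, Multiset.coe_eq_coe]
  exact List.perm_append_singleton _ _

lemma mem_tourEdges_of_mem_pathEdges {l : List V} {e : Sym2 V} (he : e ∈ pathEdges l) :
    e ∈ tourEdges l := by
  have hl : l ≠ [] := by rintro rfl; simp [pathEdges] at he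
  rw [tourEdges_eq_cons hl]
  exact Multiset.mem_cons_of_mem he

lemma card_tourEdges (l : List V) : (tourEdges l).card = l.length := by
  cases l <;> simp [tourEdges, length_pathEdges]

lemma tourEdges_append {A B : List V} (hA : A ≠ []) (hB : B ≠ []) :
    tourEdges (A ++ B) = s(A.getLast hA, B.head hB) ::ₘ s(B.getLast hB, A.head hA) ::ₘ
      (pathEdges A + pathEdges B : Multiset (Sym2 V)) := by
  rw [tourEdges_eq_cons (by simp [hA]), pathEdges_append hA hB, ← Multiset.coe_add,
    ← Multiset.cons_coe, Multiset.add_cons, Multiset.cons_swap, List.getLast_append_of_ne_nil _ hB,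
    List.head_append_of_ne_nil hA]

lemma tourEdges_append_comm (A B : List V) : tourEdges (A ++ B) = tourEdges (B ++ A) := by
  obtain rfl | hA := eq_or_ne A []
  · simp
  obtain rfl | hB := eq_or_ne B []
  · simp
  rw [tourEdges_append hA hB, tourEdges_append hB hA, Multiset.cons_swap, add_comm]

lemma exists_perm_of_mem_tourEdges {l : List V} {e : Sym2 V} (he : e ∈ tourEdges l) :
    ∃ (l' : List V) (hl' : l' ≠ []), l'.Perm l ∧ tourEdges l' = tourEdges l ∧
      e = s(l'.getLast hl', l'.head hl') := by
  have hl : l ≠ [] := by rintro rfl; simp [tourEdges, pathEdges] at he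
  rw [tourEdges_eq_cons hl, Multiset.mem_cons] at he
  rcases he with rfl | he
  · exact ⟨l, hl, .refl l, rfl, rfl⟩
  · obtain ⟨A, B, hA, hB, rfl, rfl⟩ := exists_append_of_mem_pathEdges he
    refine ⟨B ++ A, by simp [hA], List.perm_append_comm, tourEdges_append_comm B A, ?_⟩
    rw [List.getLast_append_of_ne_nil _ hA, List.head_append_of_ne_nil hB]

lemma exists_perm_tourEdges_cons {l : List V} {x y : V} (h : s(x, y) ∈ tourEdges l) (u : V) :
    ∃ l' : List V, l'.Perm (u :: l) ∧
      s(x, y) ::ₘ tourEdges l' = s(u, x) ::ₘ s(u, y) ::ₘ tourEdges l := by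
  obtain ⟨l', hl', hperm, htour, hxy⟩ := exists_perm_of_mem_tourEdges h
  refine ⟨u :: l', hperm.cons u, ?_⟩
  have hinsert : tourEdges (u :: l') =
      s(u, l'.head hl') ::ₘ s(l'.getLast hl', u) ::ₘ (pathEdges l' : Multiset (Sym2 V)) := by
    simpa [pathEdges] using tourEdges_append (List.cons_ne_nil u []) hl'
  rw [hinsert, ← htour, tourEdges_eq_cons hl', hxy]
  rcases Sym2.eq_iff.1 hxy with ⟨rfl, rfl⟩ | ⟨rfl, rfl⟩ <;>
    simp only [← Multiset.singleton_add, Sym2.eq_swap (b := u)] <;> abel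

lemma exists_perm_tourEdges_append {ι : Type*} (gs : List ι) (u x y : ι → V) {l : List V}
    (h : (gs.map fun g => s(x g, y g) : Multiset (Sym2 V)) ≤ tourEdges l) :
    ∃ l' : List V, l'.Perm (gs.map u ++ l) ∧
      tourEdges l' + (gs.map fun g => s(x g, y g) : Multiset (Sym2 V)) = tourEdges l +
        (gs.map fun g => s(u g, x g) : Multiset (Sym2 V)) +
        (gs.map fun g => s(u g, y g) : Multiset (Sym2 V)) := by
  induction gs with
  | nil => exact ⟨l, .refl l, by simp⟩
  | cons g gs ih =>
    rw [List.map_cons, ← Multiset.cons_coe, ← Multiset.singleton_add] at h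
    obtain ⟨l₁, hperm₁, hl₁⟩ := ih ((Multiset.le_add_left _ _).trans h)
    have hmem : s(x g, y g) ∈ tourEdges l₁ := by
      rw [← Multiset.singleton_le, ← add_le_add_iff_right, hl₁, add_assoc]
      exact h.trans (Multiset.le_add_right _ _)
    obtain ⟨l₂, hperm₂, hl₂⟩ := exists_perm_tourEdges_cons hmem (u g)
    refine ⟨l₂, hperm₂.trans (hperm₁.cons (u g)), ?_⟩
    simp only [← Multiset.singleton_add, ← Multiset.cons_coe, List.map_cons] at hl₂ ⊢
    rw [add_left_comm, ← add_assoc, hl₂, ← add_assoc, add_assoc _ (tourEdges l₁), hl₁]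
    abel

end Tours

section Exchange

variable {V : Type*} {G : SimpleGraph V} [DecidableRel G.Adj]

-- Pigeonhole: every other edge `s(x, y)` of the path satisfies `[q x] + [p y] ≤ 1 + [r s(x, y)]`.
lemma exists_append_of_length_add_countP_lt (p q : V → Prop) (r : Sym2 V → Prop)
    [DecidablePred p] [DecidablePred q] [DecidablePred r] {l : List V}
    (h : (pathEdges l).length + (pathEdges l).countP (r ·) <
      l.tail.countP (p ·) + l.dropLast.countP (q ·)) :
    ∃ (A B : List V) (hA : A ≠ []) (hB : B ≠ []), l = A ++ B ∧
      q (A.getLast hA) ∧ p (B.head hB) ∧ ¬ r s(A.getLast hA, B.head hB) := by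
  induction l with
  | nil => simp at h
  | cons x l ih =>
    cases l with
    | nil => simp at h
    | cons y l =>
      by_cases hxy : q x ∧ p y ∧ ¬ r s(x, y)
      · exact ⟨[x], y :: l, by simp, by simp, rfl, hxy⟩
      · have htail : (pathEdges (y :: l)).length + (pathEdges (y :: l)).countP (r ·) <
            (y :: l).tail.countP (p ·) + (y :: l).dropLast.countP (q ·) := by
          rw [pathEdges_cons x (List.cons_ne_nil y l), List.length_cons, List.countP_cons,
            List.tail_cons, List.countP_cons, List.dropLast_cons_cons, List.countP_cons] at h
          grind
        obtain ⟨A, B, hA, hB, hl, hAB⟩ := ih htail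
        exact ⟨x :: A, B, by simp, hB, by rw [hl]; rfl, by rwa [List.getLast_cons hA]⟩

lemma exists_append_adj_of_length_add_card_le (M : Finset (Sym2 V)) {l : List V} (hl : l.Nodup)
    (hne : l ≠ []) (hdeg : l.length + M.card ≤
      l.countP (G.Adj (l.head hne) ·) + l.countP (G.Adj (l.getLast hne) ·)) :
    ∃ (A B : List V) (hA : A ≠ []) (hB : B ≠ []), l = A ++ B ∧
      G.Adj (B.getLast hB) (A.getLast hA) ∧ G.Adj (A.head hA) (B.head hB) ∧
      s(A.getLast hA, B.head hB) ∉ M := by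
  have htail : l.countP (G.Adj (l.head hne) ·) = l.tail.countP (G.Adj (l.head hne) ·) := by
    rw [← List.countP_cons_of_neg (a := l.head hne) (l := l.tail) (by simp), List.cons_head_tail]
  have hdrop : l.countP (G.Adj (l.getLast hne) ·) =
      l.dropLast.countP (G.Adj (l.getLast hne) ·) := by
    simpa using
      (congrArg (List.countP (G.Adj (l.getLast hne) ·)) (List.dropLast_append_getLast hne)).symm
  have hM : (pathEdges l).countP (· ∈ M) ≤ M.card := by
    rw [List.countP_eq_length_filter, ← List.toFinset_card_of_nodup ((nodup_pathEdges hl).filter _)]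
    exact Finset.card_le_card fun e he =>
      of_decide_eq_true (List.mem_filter.1 (List.mem_toFinset.1 he)).2
  obtain ⟨A, B, hA, hB, rfl, hAB⟩ := exists_append_of_length_add_countP_lt
    (G.Adj (l.head hne)) (G.Adj (l.getLast hne)) (· ∈ M) (l := l) (by
      have := length_pathEdges l
      have := List.length_pos_of_ne_nil hne
      omega)
  rw [List.getLast_append_of_ne_nil _ hB, List.head_append_of_ne_nil hA] at hAB
  exact ⟨A, B, hA, hB, rfl, hAB⟩

lemma exists_perm_countP_tourEdges_lt {M : Finset (Sym2 V)} {l : List V} (hl : l.Nodup)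
    (hdeg : ∀ v ∈ l, l.length + M.card ≤ 2 * l.countP (G.Adj v ·)) (hMG : ↑M ⊆ G.edgeSet)
    (hMl : ∀ e ∈ M, e ∈ tourEdges l) (hlG : ¬ ∀ e ∈ tourEdges l, e ∈ G.edgeSet) :
    ∃ l' : List V, l'.Perm l ∧ (∀ e ∈ M, e ∈ tourEdges l') ∧
      (tourEdges l').countP (· ∉ G.edgeSet) < (tourEdges l).countP (· ∉ G.edgeSet) := by
  push Not at hlG
  obtain ⟨e, hel, heG⟩ := hlG
  obtain ⟨l₁, hne, hperm, htour, rfl⟩ := exists_perm_of_mem_tourEdges hel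
  rw [← htour] at hMl ⊢
  obtain ⟨A, B, hA, hB, rfl, hlast, hhead, hM⟩ :=
    exists_append_adj_of_length_add_card_le (G := G) M (hperm.nodup_iff.2 hl) hne (by
      have hdegHead := hdeg _ (hperm.subset (List.head_mem hne))
      have hdegLast := hdeg _ (hperm.subset (List.getLast_mem hne))
      rw [← hperm.countP_eq, ← hperm.length_eq] at hdegHead hdegLast
      omega)
  rw [List.getLast_append_of_ne_nil _ hB, List.head_append_of_ne_nil hA] at heG
  have hrev := tourEdges_append hA (List.reverse_ne_nil_iff.2 hB)
  rw [List.head_reverse, List.getLast_reverse,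
    Multiset.coe_eq_coe.2 (pathEdges_reverse_perm B)] at hrev
  refine ⟨A ++ B.reverse, ((List.reverse_perm B).append_left A).trans hperm, fun e he => ?_, ?_⟩
  · have hel := hMl e he
    have heG := hMG he
    rw [tourEdges_append hA hB] at hel
    rw [hrev]
    grind
  · rw [hrev, tourEdges_append hA hB]
    have h₁ : s(A.getLast hA, B.getLast hB) ∈ G.edgeSet := hlast.symm
    have h₂ : s(B.head hB, A.head hA) ∈ G.edgeSet := hhead.symm
    simp only [Multiset.countP_cons, h₁, h₂, heG]
    grind

lemma exists_perm_tourEdges_subset_edgeSet {M : Finset (Sym2 V)} {l : List V} (hl : l.Nodup)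
    (hdeg : ∀ v ∈ l, l.length + M.card ≤ 2 * l.countP (G.Adj v ·)) (hMG : ↑M ⊆ G.edgeSet)
    (hMl : ∀ e ∈ M, e ∈ tourEdges l) :
    ∃ l' : List V, l'.Perm l ∧ (∀ e ∈ M, e ∈ tourEdges l') ∧
      ∀ e ∈ tourEdges l', e ∈ G.edgeSet := by
  induction hk : (tourEdges l).countP (· ∉ G.edgeSet) using Nat.strong_induction_on
    generalizing l with
  | _ k ih =>
    by_cases hlG : ∀ e ∈ tourEdges l, e ∈ G.edgeSet
    · exact ⟨l, .refl l, hMl, hlG⟩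
    obtain ⟨l₁, hperm₁, hMl₁, hlt⟩ := exists_perm_countP_tourEdges_lt hl hdeg hMG hMl hlG
    have hdeg₁ : ∀ v ∈ l₁, l₁.length + M.card ≤ 2 * l₁.countP (G.Adj v ·) := fun v hv => by
      rw [hperm₁.length_eq, hperm₁.countP_eq]
      exact hdeg v (hperm₁.subset hv)
    obtain ⟨l₂, hperm₂, hl₂⟩ := ih _ (hk ▸ hlt) (hperm₁.nodup_iff.2 hl) hdeg₁ hMl₁ rfl
    exact ⟨l₂, hperm₂.trans hperm₁, hl₂⟩

end Exchange

section Hamilton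

variable {V : Type*} {G : SimpleGraph V}

lemma isChain_adj_of_pathEdges {l : List V} (h : ∀ e ∈ pathEdges l, e ∈ G.edgeSet) :
    l.IsChain G.Adj := by
  induction l with
  | nil => exact .nil
  | cons x l ih =>
    cases l with
    | nil => exact .singleton x
    | cons y l =>
      rw [pathEdges_cons x (List.cons_ne_nil y l), List.forall_mem_cons] at h
      exact .cons_cons h.1 (ih h.2)

lemma exists_isHamiltonianCycle_of_tourEdges_subset_edgeSet [Fintype V] [DecidableEq V]
    (hV : 3 ≤ Fintype.card V) {l : List V} (hl : l.Perm Finset.univ.toList)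
    (hG : ∀ e ∈ tourEdges l, e ∈ G.edgeSet) :
    ∃ (u : V) (H : G.Walk u u), H.IsHamiltonianCycle ∧ (H.edges : Multiset (Sym2 V)) =
      tourEdges l := by
  have hlen : l.length = Fintype.card V := by simpa using hl.length_eq
  cases l with
  | nil => rw [List.length_nil] at hlen; omega
  | cons x l =>
  have hchain : (x :: (l ++ [x])).IsChain G.Adj := isChain_adj_of_pathEdges hG
  let H : G.Walk x x := (Walk.ofSupport _ (List.cons_ne_nil _ _) hchain).copy rfl (by simp)
  have hsupport : H.support = x :: (l ++ [x]) :=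
    (Walk.support_copy _ _ _).trans (Walk.support_ofSupport _ hchain)
  have hlength : H.length = Fintype.card V := by
    have := H.length_support
    grind
  have hnodup : (l ++ [x]).Nodup :=
    ((List.perm_append_singleton x l).trans hl).nodup_iff.2 (Finset.nodup_toList _)
  refine ⟨x, H, ?_, ?_⟩
  · rw [Walk.isHamiltonianCycle_iff_isCycle_and_length_eq]
    refine ⟨Walk.isCycle_iff_isPath_tail_and_le_length.2 ⟨?_, hlength ▸ hV⟩, hlength⟩
    rw [Walk.isPath_def, Walk.support_tail_of_not_nil, hsupport]
    · exact hnodup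
    · rw [Walk.not_nil_iff_lt_length]; omega
  · rw [Walk.edges_eq_zipWith_support, hsupport]
    rfl

end Hamilton

lemma sum_countP_eq_card {α K : Type*} [Fintype K] [DecidableEq K] (f : α → K) (s : Multiset α) :
    ∑ c, s.countP (f · = c) = s.card := by
  induction s using Multiset.induction_on with
  | empty => simp
  | cons a s ih => simp [Multiset.countP_cons, Finset.sum_add_distrib, ih]

/-- A *gadget*: a vertex `center` together with two edges `s(fst i, snd i)`, `i : Bool`, into
either of which the center can be inserted when both edges lie on a tour avoiding the center. -/
structure Gadget (V : Type*) where
  center : V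
  fst : Bool → V
  snd : Bool → V

namespace Gadget

variable {V K : Type*}

/-- The edge of the gadget with index `i`. -/
def edge (g : Gadget V) (i : Bool) : Sym2 V := s(g.fst i, g.snd i)

/-- The endpoints of the two edges of the gadget, in an order in which the path through them
traverses both edges. -/
def endpoints (g : Gadget V) : List V := [g.fst true, g.snd true, g.fst false, g.snd false]

/-- All vertices of the gadget. -/
def verts (g : Gadget V) : List V := g.center :: g.endpoints

/-- The center and either edge of the gadget form a triangle of `G`. -/
def LiesIn (g : Gadget V) (G : SimpleGraph V) : Prop :=
  ∀ i, G.Adj g.center (g.fst i) ∧ G.Adj g.center (g.snd i) ∧ G.Adj (g.fst i) (g.snd i)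

/-- The change in the number of edges of colour `c` when the center is inserted into edge `i`. -/
def gain [DecidableEq K] (χ : Sym2 V → K) (c : K) (g : Gadget V) (i : Bool) : ℤ :=
  (if χ s(g.center, g.fst i) = c then 1 else 0) + (if χ s(g.center, g.snd i) = c then 1 else 0) -
    (if χ (g.edge i) = c then 1 else 0)

/-- Switching the inserted edge of the gadget `g` changes the distribution of colours. -/
def Switching [DecidableEq K] (χ : Sym2 V → K) (g : Gadget V) : Prop :=
  ∃ c, g.gain χ c true ≠ g.gain χ c false

lemma length_flatMap_verts (gs : List (Gadget V)) :
    (gs.flatMap verts).length = 5 * gs.length := by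
  simp [verts, endpoints, mul_comm]

lemma edge_mem_pathEdges_endpoints (g : Gadget V) (i : Bool) :
    g.edge i ∈ pathEdges g.endpoints := by
  cases i <;> simp [edge, endpoints, pathEdges]

lemma nodup_map_edge {gs : List (Gadget V)} (hdisj : (gs.flatMap verts).Nodup)
    (i : Gadget V → Bool) : (gs.map fun g => g.edge (i g)).Nodup := by
  refine List.pairwise_map.2 ((List.nodup_flatMap.1 hdisj).2.imp fun {g g'} hgg' hedge => ?_)
  have hmem (g : Gadget V) : g.fst (i g) ∈ g.edge (i g) := Sym2.mem_mk_left _ _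
  have hverts (g : Gadget V) {v : V} (hv : v ∈ g.edge (i g)) : v ∈ g.verts :=
    List.mem_cons_of_mem _ (mem_of_mem_pathEdges (g.edge_mem_pathEdges_endpoints _) hv)
  exact hgg' (hverts g (hmem g)) (hverts g' (hedge ▸ hmem g))

lemma sum_map_gain [DecidableEq K] (χ : Sym2 V → K) (c : K) (gs : List (Gadget V))
    (i : Gadget V → Bool) : (gs.map fun g => g.gain χ c (i g)).sum =
      (gs.map fun g => s(g.center, g.fst (i g))).countP (χ · = c) +
        (gs.map fun g => s(g.center, g.snd (i g))).countP (χ · = c) -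
        (gs.map fun g => s(g.fst (i g), g.snd (i g))).countP (χ · = c) := by
  induction gs with
  | nil => simp
  | cons g gs ih =>
    rw [List.map_cons, List.sum_cons, ih]
    simp only [List.map_cons, List.countP_cons, gain, edge, decide_eq_true_eq]
    grind

lemma LiesIn.nodup_verts {G : SimpleGraph V} {g : Gadget V} (hg : g.LiesIn G)
    (hdisj : ∀ v ∈ g.edge false, v ∉ g.edge true) : g.verts.Nodup := by
  have htrue := hg true
  have hfalse := hg false
  have := htrue.1.ne
  have := htrue.2.1.ne
  have := htrue.2.2.ne
  have := hfalse.1.ne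
  have := hfalse.2.1.ne
  have := hfalse.2.2.ne
  simp only [edge, Sym2.mem_iff] at hdisj
  simp only [verts, endpoints, List.nodup_cons, List.mem_cons]
  grind

variable [Fintype K] [DecidableEq K]

lemma sum_gain (χ : Sym2 V → K) (g : Gadget V) (i : Bool) : ∑ c, g.gain χ c i = 1 := by
  simp [gain, Finset.sum_add_distrib]

lemma Switching.two_le_sum_max_gain {χ : Sym2 V → K} {g : Gadget V} (hg : g.Switching χ) :
    2 ≤ ∑ c, max (g.gain χ c true) (g.gain χ c false) := by
  obtain ⟨c, hc⟩ := hg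
  rcases lt_or_gt_of_ne hc with hlt | hlt
  · have := Finset.sum_lt_sum (fun c _ => le_max_left (g.gain χ c true) (g.gain χ c false))
      ⟨c, Finset.mem_univ c, lt_max_of_lt_right hlt⟩
    rwa [sum_gain] at this
  · have := Finset.sum_lt_sum (fun c _ => le_max_right (g.gain χ c true) (g.gain χ c false))
      ⟨c, Finset.mem_univ c, lt_max_of_lt_left hlt⟩
    rwa [sum_gain] at this

lemma two_mul_length_le_sum_max_gain {χ : Sym2 V → K} {gs : List (Gadget V)}
    (hgs : ∀ g ∈ gs, g.Switching χ) :
    2 * (gs.length : ℤ) ≤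
      ∑ c, (gs.map fun g => max (g.gain χ c true) (g.gain χ c false)).sum := by
  induction gs with
  | nil => simp
  | cons g gs ih =>
    rw [List.forall_mem_cons] at hgs
    have hg := hgs.1.two_le_sum_max_gain
    have hrest := ih hgs.2
    simp only [List.map_cons, List.sum_cons, Finset.sum_add_distrib, List.length_cons]
    push_cast
    linarith

end Gadget

section GadgetTours

variable {V K : Type*} {G : SimpleGraph V} {gs : List (Gadget V)}

lemma countP_adj_toList_univ [Fintype V] [DecidableRel G.Adj] (v : V) :
    (Finset.univ.toList : List V).countP (G.Adj v ·) = G.degree v := by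
  rw [← G.card_neighborFinset_eq_degree, G.neighborFinset_eq_filter, ← Multiset.coe_countP,
    Finset.coe_toList, Multiset.countP_eq_card_filter]
  rfl

lemma length_add_le_two_mul_countP_adj [Fintype V] [DecidableRel G.Adj] {us l : List V}
    (hl : (us ++ l).Perm Finset.univ.toList) {v : V}
    (hv : Fintype.card V + 3 * us.length ≤ 2 * G.degree v) :
    l.length + 2 * us.length ≤ 2 * l.countP (G.Adj v ·) := by
  have hlength := hl.length_eq
  have hcount := hl.countP_eq (G.Adj v ·)
  have hus := us.countP_le_length (p := (G.Adj v ·))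
  rw [List.length_append, Finset.length_toList, Finset.card_univ] at hlength
  rw [List.countP_append, countP_adj_toList_univ] at hcount
  omega

lemma exists_perm_edge_mem_tourEdges [Fintype V] (hdisj : (gs.flatMap Gadget.verts).Nodup) :
    ∃ l : List V, (gs.map Gadget.center ++ l).Perm Finset.univ.toList ∧
      ∀ g ∈ gs, ∀ i, g.edge i ∈ tourEdges l := by
  obtain ⟨l₁, hl₁, hsub⟩ := List.subperm_of_subset hdisj (l₂ := Finset.univ.toList)
    fun v _ => Finset.mem_toList.2 (Finset.mem_univ v)
  obtain ⟨rest, hrest⟩ := hsub.exists_perm_append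
  refine ⟨gs.flatMap Gadget.endpoints ++ rest, ?_, fun g hg i => ?_⟩
  · rw [← List.append_assoc]
    exact (((List.map_append_flatMap_perm gs Gadget.center Gadget.endpoints).trans
      hl₁.symm).append_right rest).trans hrest.symm
  · have hinfix : g.endpoints <:+: gs.flatMap Gadget.endpoints ++ rest :=
      List.infix_append_of_infix_left (List.infix_of_mem_flatten (List.mem_map_of_mem hg))
    exact mem_tourEdges_of_mem_pathEdges
      (pathEdges_subset_of_infix hinfix (g.edge_mem_pathEdges_endpoints i))

lemma exists_tour_of_gadgets [Fintype V] [DecidableRel G.Adj]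
    (hdisj : (gs.flatMap Gadget.verts).Nodup) (hgs : ∀ g ∈ gs, g.LiesIn G)
    (hdeg : ∀ v, Fintype.card V + 3 * gs.length ≤ 2 * G.degree v) :
    ∃ l : List V, (gs.map Gadget.center ++ l).Perm Finset.univ.toList ∧
      (∀ e ∈ tourEdges l, e ∈ G.edgeSet) ∧ ∀ g ∈ gs, ∀ i, g.edge i ∈ tourEdges l := by
  obtain ⟨l, hl, hedge⟩ := exists_perm_edge_mem_tourEdges hdisj
  let M := (gs.flatMap fun g => [g.edge true, g.edge false]).toFinset
  have hmemM {e : Sym2 V} : e ∈ M ↔ ∃ g ∈ gs, ∃ i, e = g.edge i := by simp [M, or_comm]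
  have hcardM : M.card ≤ 2 * gs.length := (List.toFinset_card_le _).trans (by simp [mul_comm])
  have hMG : ↑M ⊆ G.edgeSet := fun e he => by
    obtain ⟨g, hg, i, rfl⟩ := hmemM.1 he
    exact (hgs g hg i).2.2
  have hMl : ∀ e ∈ M, e ∈ tourEdges l := fun e he => by
    obtain ⟨g, hg, i, rfl⟩ := hmemM.1 he
    exact hedge g hg i
  have hdegl : ∀ v ∈ l, l.length + M.card ≤ 2 * l.countP (G.Adj v ·) := fun v _ => by
    have hcount := length_add_le_two_mul_countP_adj (G := G) hl (v := v) (by simpa using hdeg v)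
    rw [List.length_map] at hcount
    omega
  obtain ⟨l', hl', hMl', hG⟩ := exists_perm_tourEdges_subset_edgeSet
    (hl.nodup_iff.2 (Finset.nodup_toList _)).of_append_right hdegl hMG hMl
  exact ⟨l', (hl'.append_left _).trans hl, hG, fun g hg i => hMl' _ (hmemM.2 ⟨g, hg, i, rfl⟩)⟩

lemma exists_isHamiltonianCycle_countP_eq [Fintype V] [DecidableEq V] [DecidableEq K]
    (hV : 3 ≤ Fintype.card V) (χ : Sym2 V → K) (hdisj : (gs.flatMap Gadget.verts).Nodup)
    (hgs : ∀ g ∈ gs, g.LiesIn G) {l : List V}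
    (hl : (gs.map Gadget.center ++ l).Perm Finset.univ.toList)
    (hlG : ∀ e ∈ tourEdges l, e ∈ G.edgeSet) (i : Gadget V → Bool)
    (hedge : ∀ g ∈ gs, g.edge (i g) ∈ tourEdges l) :
    ∃ (u : V) (H : G.Walk u u), H.IsHamiltonianCycle ∧
      ∀ c, (H.edges.countP (χ · = c) : ℤ) =
        (tourEdges l).countP (χ · = c) + (gs.map fun g => g.gain χ c (i g)).sum := by
  have hle : (gs.map fun g => s(g.fst (i g), g.snd (i g)) : Multiset (Sym2 V)) ≤ tourEdges l :=
    (Multiset.le_iff_subset (Multiset.coe_nodup.2 (Gadget.nodup_map_edge hdisj i))).2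
      fun e he => by obtain ⟨g, hg, rfl⟩ := List.mem_map.1 he; exact hedge g hg
  obtain ⟨l', hl', htour⟩ := exists_perm_tourEdges_append gs Gadget.center _ _ hle
  have hl'G : ∀ e ∈ tourEdges l', e ∈ G.edgeSet := fun e he => by
    have hmem := Multiset.mem_of_le ((Multiset.le_add_right _ _).trans_eq htour) he
    rw [Multiset.mem_add, Multiset.mem_add, Multiset.mem_coe, Multiset.mem_coe] at hmem
    rcases hmem with (he | he) | he
    · exact hlG e he
    · obtain ⟨g, hg, rfl⟩ := List.mem_map.1 he
      exact (hgs g hg (i g)).1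
    · obtain ⟨g, hg, rfl⟩ := List.mem_map.1 he
      exact (hgs g hg (i g)).2.1
  obtain ⟨u, H, hH, hedges⟩ :=
    exists_isHamiltonianCycle_of_tourEdges_subset_edgeSet hV (hl'.trans hl) hl'G
  refine ⟨u, H, hH, fun c => ?_⟩
  have hcount := congrArg (Multiset.countP (χ · = c)) htour
  simp only [Multiset.countP_add, ← hedges, Multiset.coe_countP] at hcount
  rw [Gadget.sum_map_gain]
  zify at hcount
  linarith

lemma exists_isHamiltonianCycle_of_gadgets [Fintype V] [DecidableEq V] [DecidableRel G.Adj]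
    [Fintype K] [DecidableEq K] (hV : 3 ≤ Fintype.card V) (χ : Sym2 V → K)
    (hdisj : (gs.flatMap Gadget.verts).Nodup) (hgs : ∀ g ∈ gs, g.LiesIn G)
    (hswitch : ∀ g ∈ gs, g.Switching χ)
    (hdeg : ∀ v, Fintype.card V + 3 * gs.length ≤ 2 * G.degree v) :
    ∃ (u : V) (H : G.Walk u u), H.IsHamiltonianCycle ∧
      ∃ c, Fintype.card V + gs.length ≤ Fintype.card K * H.edges.countP (χ · = c) := by
  obtain ⟨l, hl, hlG, hedge⟩ := exists_tour_of_gadgets hdisj hgs hdeg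
  have hbest (c : K) (g : Gadget V) :
      ∃ i, g.gain χ c i = max (g.gain χ c true) (g.gain χ c false) := by
    rcases max_choice (g.gain χ c true) (g.gain χ c false) with h | h <;> exact ⟨_, h.symm⟩
  choose i hi using hbest
  choose u H hH hcount using fun c =>
    exists_isHamiltonianCycle_countP_eq hV χ hdisj hgs hl hlG (i c) fun g hg => hedge g hg _
  have hcard : ∑ c, (tourEdges l).countP (χ · = c) + gs.length = Fintype.card V := by
    have hlength := hl.length_eq
    rw [List.length_append, List.length_map, Finset.length_toList, Finset.card_univ] at hlength
    rw [sum_countP_eq_card, card_tourEdges, ← hlength, add_comm]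
  have hsum : Fintype.card V + gs.length ≤ ∑ c, (H c).edges.countP (χ · = c) := by
    have hgain := Gadget.two_mul_length_le_sum_max_gain hswitch
    zify at hcard ⊢
    simp only [hcount, Finset.sum_add_distrib, hi]
    linarith
  have : Nonempty K :=
    let ⟨v⟩ : Nonempty V := Fintype.card_pos_iff.1 (by omega)
    ⟨χ s(v, v)⟩
  obtain ⟨c, -, hc⟩ := Finset.exists_le_of_sum_le (Finset.univ_nonempty (α := K))
    (f := fun _ => Fintype.card V + gs.length)
    (g := fun c => Fintype.card K * (H c).edges.countP (χ · = c)) (by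
      rw [← Finset.mul_sum, Finset.sum_const, smul_eq_mul]
      exact Nat.mul_le_mul_left _ hsum)
  exact ⟨u c, H c, hH c, c, hc⟩

end GadgetTours

section FindingGadgets

variable {V K : Type*}

lemma exists_disjoint_gadgets (X : Finset V) (P : Gadget V → Prop)
    (h : ∀ v ∈ X, ∀ F : Finset V, v ∉ F → F.card ≤ 5 * X.card →
      ∃ g, P g ∧ g.verts.Nodup ∧ ∀ w ∈ g.verts, w ∉ F) :
    ∃ gs : List (Gadget V), gs.length = X.card ∧ (gs.flatMap Gadget.verts).Nodup ∧
      ∀ g ∈ gs, P g := by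
  suffices hsub : ∀ T ⊆ X, ∃ gs : List (Gadget V), gs.length = T.card ∧
      (gs.flatMap Gadget.verts).Nodup ∧ (∀ g ∈ gs, P g) ∧
      ∀ w ∈ gs.flatMap Gadget.verts, w ∉ X \ T by
    obtain ⟨gs, hlen, hnodup, hP, -⟩ := hsub X subset_rfl
    exact ⟨gs, hlen, hnodup, hP⟩
  intro T hTX
  induction T using Finset.induction_on with
  | empty => exact ⟨[], by simp⟩
  | insert v T hvT ih =>
    obtain ⟨hvX, hTX⟩ := Finset.insert_subset_iff.1 hTX
    obtain ⟨gs, hlen, hnodup, hP, havoid⟩ := ih hTX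
    set F := (gs.flatMap Gadget.verts).toFinset ∪ X \ insert v T with hF
    have hvF : v ∉ F := by
      have := havoid v
      simp_all
    have hcardF : F.card ≤ 5 * X.card := by
      have hverts := (gs.flatMap Gadget.verts).toFinset_card_le
      have hcard := Finset.card_sdiff_add_card_eq_card (Finset.insert_subset hvX hTX)
      have hunion : F.card ≤ _ := Finset.card_union_le _ _
      rw [Gadget.length_flatMap_verts, hlen] at hverts
      rw [Finset.card_insert_of_notMem hvT] at hcard
      omega
    obtain ⟨g, hg, hgnodup, hgF⟩ := h v hvX F hvF hcardF
    refine ⟨g :: gs, by simp [hlen, hvT], ?_, List.forall_mem_cons.2 ⟨hg, hP⟩, ?_⟩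
    · refine hgnodup.append hnodup fun w hw hw' => hgF w hw ?_
      exact Finset.mem_union_left _ (List.mem_toFinset.2 hw')
    · intro w hw hwX
      rcases List.mem_append.1 hw with hw | hw
      · exact hgF w hw (Finset.mem_union_right _ hwX)
      · exact havoid w hw (Finset.sdiff_subset_sdiff subset_rfl (Finset.subset_insert v T) hwX)

variable {G : SimpleGraph V} {M : Finset (Sym2 V)}

lemma MatchingIn.mono {M' : Finset (Sym2 V)} (hM : MatchingIn M G) (h : M' ⊆ M) :
    MatchingIn M' G :=
  ⟨fun e he => hM.1 e (h he), fun e he f hf => hM.2 e (h he) f (h hf)⟩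

lemma MatchingIn.exists_adj_notMem (hM : MatchingIn M G) {F : Finset V}
    (hF : F.card < M.card) : ∃ x y, s(x, y) ∈ M ∧ G.Adj x y ∧ x ∉ F ∧ y ∉ F := by
  by_contra! hall
  refine hF.not_ge (Finset.card_le_card_of_forall_subsingleton (fun e v => v ∈ e) ?_ ?_)
  · intro e he
    induction e with
    | _ x y =>
      by_contra! hxy
      exact hxy y (hall x y he (hM.1 _ he) fun hx => hxy x hx (Sym2.mem_mk_left x y))
        (Sym2.mem_mk_right x y)
  · intro v _ e he f hf
    by_contra hne
    exact hM.2 e he.1 f hf.1 hne v ⟨he.2, hf.2⟩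

/-- The neighbourhood of `v` contains a matching of at least `m` edges, none of colour `c`. -/
def HasAvoidingMatching (G : SimpleGraph V) (χ : Sym2 V → K) (c : K) (v : V) (m : ℕ) : Prop :=
  ∃ M : Finset (Sym2 V), MatchingIn M G ∧ (∀ e ∈ M, ∀ w ∈ e, G.Adj v w) ∧ (∀ e ∈ M, χ e ≠ c) ∧
    m ≤ M.card

lemma HasAvoidingMatching.exists_adj {χ : Sym2 V → K} {c : K} {v : V} {m : ℕ}
    (h : HasAvoidingMatching G χ c v m) {F : Finset V} (hF : F.card < m) :
    ∃ x y, G.Adj x y ∧ G.Adj v x ∧ G.Adj v y ∧ χ s(x, y) ≠ c ∧ x ∉ F ∧ y ∉ F := by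
  obtain ⟨M, hM, hv, hc, hm⟩ := h
  obtain ⟨x, y, hxy, hadj, hx, hy⟩ := hM.exists_adj_notMem (hF.trans_le hm)
  exact ⟨x, y, hadj, hv _ hxy x (Sym2.mem_mk_left x y), hv _ hxy y (Sym2.mem_mk_right x y),
    hc _ hxy, hx, hy⟩

end FindingGadgets

section XsetYset

variable {n r : ℕ} {G : SimpleGraph (Fin n)} {χ : Sym2 (Fin n) → Fin r} {c : Fin r} {t : ℕ}
  {v : Fin n} {F : Finset (Fin n)}

lemma exists_monochromatic_spokes_of_mem_Xset (hv : v ∈ Xset G χ c t) {d : Fin r} {m : ℕ}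
    (hmatch : HasAvoidingMatching G χ d v m) (hF : 8 * t + F.card ≤ m) :
    ∃ x y, G.Adj x y ∧ G.Adj v x ∧ G.Adj v y ∧ χ s(v, x) = c ∧ χ s(v, y) = c ∧
      χ s(x, y) ≠ d ∧ x ∉ F ∧ y ∉ F := by
  obtain ⟨M, hM, hadj, hd, hm⟩ := hmatch
  have hfew := hv _ (hM.mono (Finset.filter_subset (¬ ∀ w ∈ ·, χ s(v, w) = c) M))
    (fun e he => hadj e (Finset.mem_filter.1 he).1) fun e he => (Finset.mem_filter.1 he).2
  have hsplit := Finset.card_filter_add_card_filter_not (s := M) (∀ w ∈ ·, χ s(v, w) = c)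
  obtain ⟨x, y, hxy, hadjxy, hx, hy⟩ := (hM.mono (Finset.filter_subset
    (∀ w ∈ ·, χ s(v, w) = c) M)).exists_adj_notMem (F := F) (by omega)
  obtain ⟨hxyM, hc⟩ := Finset.mem_filter.1 hxy
  have hxmem := Sym2.mem_mk_left x y
  have hymem := Sym2.mem_mk_right x y
  exact ⟨x, y, hadjxy, hadj _ hxyM x hxmem, hadj _ hxyM y hymem, hc x hxmem, hc y hymem,
    hd _ hxyM, hx, hy⟩

lemma exists_adj_of_mem_Yset (hv : v ∈ Yset G χ c t) (hF : F.card < 4 * t) :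
    ∃ p q, G.Adj p q ∧ G.Adj v p ∧ G.Adj v q ∧ χ s(v, p) = c ∧ χ s(v, q) ≠ c ∧
      χ s(p, q) ≠ c ∧ p ∉ F ∧ q ∉ F := by
  obtain ⟨M, hM, hadj, hcross, hc, hm⟩ := hv
  obtain ⟨x, y, hxy, hadjxy, hx, hy⟩ := hM.exists_adj_notMem (hF.trans_le hm)
  obtain ⟨p, q, hpq, hp, hq⟩ := hcross _ hxy
  have hvx := hadj _ hxy x (Sym2.mem_mk_left x y)
  have hvy := hadj _ hxy y (Sym2.mem_mk_right x y)
  have hxyc := hc _ hxy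
  rcases Sym2.eq_iff.1 hpq with ⟨rfl, rfl⟩ | ⟨rfl, rfl⟩
  · exact ⟨x, y, hadjxy, hvx, hvy, hp, hq, hxyc, hx, hy⟩
  · exact ⟨y, x, hadjxy.symm, hvy, hvx, hp, hq, Sym2.eq_swap ▸ hxyc, hy, hx⟩

lemma exists_gadget_of_mem_Xset (hv : v ∈ Xset G χ c t) {m : ℕ}
    (hmatch : ∀ d, HasAvoidingMatching G χ d v m) (hF : 8 * t + F.card + 2 ≤ m) (hvF : v ∉ F) :
    ∃ g : Gadget (Fin n), (g.LiesIn G ∧ g.Switching χ) ∧ g.verts.Nodup ∧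
      ∀ w ∈ g.verts, w ∉ F := by
  obtain ⟨x, y, hxy, hvx, hvy, hcx, hcy, -, hx, hy⟩ :=
    exists_monochromatic_spokes_of_mem_Xset hv (hmatch c) (F := F) (by omega)
  obtain ⟨z, w, hzw, hvz, hvw, hcz, hcw, hd, hz, hw⟩ :=
    exists_monochromatic_spokes_of_mem_Xset hv (hmatch (χ s(x, y))) (F := insert x (insert y F))
      (by have := Finset.card_insert_le x (insert y F)
          have := Finset.card_insert_le y F
          omega)
  let g : Gadget (Fin n) := ⟨v, (cond · x z), (cond · y w)⟩
  have hg : g.LiesIn G := Bool.forall_bool.2 ⟨⟨hvz, hvw, hzw⟩, ⟨hvx, hvy, hxy⟩⟩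
  simp only [Finset.mem_insert, not_or] at hz hw
  refine ⟨g, ⟨hg, χ s(x, y), ?_⟩, hg.nodup_verts ?_, ?_⟩
  · simp [g, Gadget.gain, Gadget.edge, hcx, hcy, hcz, hcw, hd]
  · simp [g, Gadget.edge, hz, hw]
  · simp [g, Gadget.verts, Gadget.endpoints, hvF, hx, hy, hz, hw]

lemma exists_gadget_of_mem_Yset (hv : v ∈ Yset G χ c t) (hF : F.card < 4 * t) {m : ℕ}
    (hmatch : ∀ q, HasAvoidingMatching G χ c q m) (hFm : F.card + 2 < m) (hvF : v ∉ F) :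
    ∃ g : Gadget (Fin n), (g.LiesIn G ∧ g.Switching χ) ∧ g.verts.Nodup ∧
      ∀ w ∈ g.verts, w ∉ F := by
  obtain ⟨p, q, hpq, hvp, hvq, hcp, hcq, hcpq, hp, hq⟩ := exists_adj_of_mem_Yset hv hF
  obtain ⟨z, w, hzw, hqz, hqw, hczw, hz, hw⟩ := (hmatch q).exists_adj (F := insert v (insert p F))
    (by have := Finset.card_insert_le v (insert p F)
        have := Finset.card_insert_le p F
        omega)
  let g : Gadget (Fin n) := ⟨q, (cond · v z), (cond · p w)⟩
  have hg : g.LiesIn G := Bool.forall_bool.2 ⟨⟨hqz, hqw, hzw⟩, ⟨hvq.symm, hpq.symm, hvp⟩⟩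
  simp only [Finset.mem_insert, not_or] at hz hw
  rw [Sym2.eq_swap] at hcq hcpq
  refine ⟨g, ⟨hg, c, ?_⟩, hg.nodup_verts ?_, ?_⟩
  · have htrue : g.gain χ c true = -1 := by simp [g, Gadget.gain, Gadget.edge, hcp, hcq, hcpq]
    have hfalse : 0 ≤ g.gain χ c false := by
      simp only [g, Gadget.gain, Gadget.edge, cond_false, hczw, if_false, sub_zero]
      positivity
    omega
  · simp [g, Gadget.edge, hz, hw]
  · simp [g, Gadget.verts, Gadget.endpoints, hvF, hp, hq, hz, hw]

lemma exists_isHamiltonianCycle_of_card_le_ncard {k m : ℕ} (hn : 3 ≤ n)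
    (hdeg : ∀ v, n + 3 * k ≤ 2 * G.degree v) (hmatch : ∀ d v, HasAvoidingMatching G χ d v m)
    (hm : 8 * t + 5 * k + 2 ≤ m) (hkt : 5 * k < 4 * t)
    (hk : k ≤ (Xset G χ c t).ncard ∨ k ≤ (Yset G χ c t).ncard) :
    ∃ (u : Fin n) (H : G.Walk u u), H.IsHamiltonianCycle ∧
      ∃ d, n + k ≤ r * H.edges.countP (χ · = d) := by
  have hgadget : ∀ v ∈ Xset G χ c t ∪ Yset G χ c t, ∀ F : Finset (Fin n), v ∉ F →
      F.card ≤ 5 * k → ∃ g : Gadget (Fin n), (g.LiesIn G ∧ g.Switching χ) ∧ g.verts.Nodup ∧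
        ∀ w ∈ g.verts, w ∉ F := by
    rintro v (hv | hv) F hvF hF
    · exact exists_gadget_of_mem_Xset hv (hmatch · v) (by omega) hvF
    · exact exists_gadget_of_mem_Yset hv (by omega) (hmatch c) (by omega) hvF
  have hcard : k ≤ (Xset G χ c t ∪ Yset G χ c t).toFinset.card := by
    rw [← Set.ncard_eq_toFinset_card']
    exact hk.elim (·.trans (Set.ncard_le_ncard Set.subset_union_left))
      (·.trans (Set.ncard_le_ncard Set.subset_union_right))
  obtain ⟨X, hX, rfl⟩ := Finset.exists_subset_card_eq hcard
  obtain ⟨gs, hlen, hdisj, hgs⟩ := exists_disjoint_gadgets X _ fun v hv =>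
    hgadget v (Set.mem_toFinset.1 (hX hv))
  rw [← hlen] at hdeg ⊢
  simpa only [Fintype.card_fin] using exists_isHamiltonianCycle_of_gadgets
    (by simpa using hn) χ hdisj (fun g hg => (hgs g hg).1) (fun g hg => (hgs g hg).2)
    (by simpa using hdeg)

end XsetYset

section Arithmetic

variable {n r b : ℕ}

lemma mul_sq_mul_le_of_le_inv (hr : 0 < r) (hbn : (b : ℝ) ≤ 2⁻¹ ^ 10 * ((r : ℝ))⁻¹ ^ 2 * n) :
    1024 * r ^ 2 * b ≤ n := by
  have hr' : (0 : ℝ) < r := Nat.cast_pos.2 hr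
  field_simp at hbn
  exact_mod_cast (by linarith : (1024 * r ^ 2 * b : ℝ) ≤ n)

lemma add_mul_le_two_mul_of_le {d : ℕ} (hr : 0 < r) (hbn : 1024 * r ^ 2 * b ≤ n)
    (hd : ((r : ℝ) + 1) / (2 * r) * n ≤ d) : n + 3 * (2 * r * b) ≤ 2 * d := by
  have hr' : (0 : ℝ) < r := Nat.cast_pos.2 hr
  rw [div_mul_eq_mul_div, div_le_iff₀ (by positivity)] at hd
  have hd' : (r + 1) * n ≤ d * (2 * r) := by exact_mod_cast hd
  refine Nat.le_of_mul_le_mul_left (c := r) ?_ hr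
  nlinarith

end Arithmetic

theorem stmt_14_general {n r b : ℕ} (hb : 1 ≤ b)
    (hbn : (b : ℝ) ≤ 2⁻¹ ^ 10 * ((r : ℝ))⁻¹ ^ 2 * n) (G : SimpleGraph (Fin n))
    (hdeg : ∀ u : Fin n, ((r : ℝ) + 1) / (2 * r) * n ≤ ((G.neighborSet u).ncard : ℝ))
    (χ : Sym2 (Fin n) → Fin r)
    (hmatch : ∀ c v, HasAvoidingMatching G χ c v (2 ^ 9 * r * b))
    (hXY : ∃ c : Fin r,
      ((8 * r * b : ℕ) : ℝ) / 4 ≤ ((Xset G χ c (2 ^ 5 * r * b)).ncard : ℝ) ∨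
      ((8 * r * b : ℕ) : ℝ) / 4 ≤ ((Yset G χ c (2 ^ 5 * r * b)).ncard : ℝ)) :
    ∃ (u : Fin n) (H : G.Walk u u), H.IsHamiltonianCycle ∧
      ∃ c : Fin r, (n : ℝ) / r + 2 * (b : ℝ) ≤
        ((H.edges.filter fun e => decide (χ e = c)).length : ℝ) := by
  obtain ⟨c, hc⟩ := hXY
  have hr : 0 < r := c.pos
  have hrb : 1 ≤ r * b := Nat.mul_pos hr hb
  have hbn' := mul_sq_mul_le_of_le_inv hr hbn
  have hquarter : ((8 * r * b : ℕ) : ℝ) / 4 = (2 * r * b : ℕ) := by push_cast; ring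
  simp only [hquarter, Nat.cast_le] at hc
  have hdegree (v : Fin n) : (G.neighborSet v).ncard = G.degree v := by
    rw [← G.card_neighborFinset_eq_degree, ← Set.ncard_coe_finset, G.coe_neighborFinset]
  simp only [hdegree] at hdeg
  obtain ⟨u, H, hH, d, hd⟩ := exists_isHamiltonianCycle_of_card_le_ncard (k := 2 * r * b)
    (by nlinarith) (fun v => add_mul_le_two_mul_of_le hr hbn' (hdeg v)) hmatch
    (by grind) (by grind) hc
  refine ⟨u, H, hH, d, ?_⟩
  rw [← List.countP_eq_length_filter, div_add' _ _ _ (by positivity),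
    div_le_iff₀' (by positivity)]
  have hd' : (n + 2 * r * b : ℝ) ≤ r * H.edges.countP (χ · = d) := by exact_mod_cast hd
  linarith

/-- Let `r ≥ 2`. For all sufficiently large `n`, all
`1 ≤ b ≤ 2⁻¹⁰ r⁻² n`, with `t = 2⁵ r b` and `s = 8 r b`: let `G` be a graph on `n`
vertices with minimum degree at least `(r+1)n/(2r)` and `χ` an `r`-colouring such that
for each colour `c` and vertex `v` there is a matching in `G[N(v)]` with at least
`2⁹ r b` edges none of colour `c`. If `|X_c| ≥ s/4` or `|Y_c| ≥ s/4` for some colour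
`c`, then `G` has a Hamilton cycle with colour bias at least `b`. -/
theorem stmt_14 (r : ℕ) (hr : 2 ≤ r) :
    ∃ N : ℕ, ∀ n ≥ N, ∀ b : ℕ, 1 ≤ b → (b : ℝ) ≤ 2⁻¹ ^ 10 * ((r : ℝ))⁻¹ ^ 2 * n →
      ∀ G : SimpleGraph (Fin n),
        (∀ u : Fin n, ((r : ℝ) + 1) / (2 * r) * n ≤ ((G.neighborSet u).ncard : ℝ)) →
        ∀ χ : Sym2 (Fin n) → Fin r,
          (∀ (c : Fin r) (v : Fin n), ∃ M : Finset (Sym2 (Fin n)), MatchingIn M G ∧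
            (∀ e ∈ M, ∀ w ∈ e, G.Adj v w) ∧ (∀ e ∈ M, χ e ≠ c) ∧ 2 ^ 9 * r * b ≤ M.card) →
          (∃ c : Fin r,
            ((8 * r * b : ℕ) : ℝ) / 4 ≤ ((Xset G χ c (2 ^ 5 * r * b)).ncard : ℝ) ∨
            ((8 * r * b : ℕ) : ℝ) / 4 ≤ ((Yset G χ c (2 ^ 5 * r * b)).ncard : ℝ)) →
          ∃ (u : Fin n) (H : G.Walk u u), H.IsHamiltonianCycle ∧
            ∃ c : Fin r,
              (n : ℝ) / r + (b : ℝ) ≤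
                ((H.edges.filter fun e => decide (χ e = c)).length : ℝ) := by
  refine ⟨0, fun n _ b hb hbn G hdeg χ hmatch hXY => ?_⟩
  obtain ⟨u, H, hH, c, hc⟩ := stmt_14_general hb hbn G hdeg χ hmatch hXY
  exact ⟨u, H, hH, c, le_trans (by linarith [b.cast_nonneg (α := ℝ)]) hc⟩
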